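/- Assume ρ(r,θ) > 0 and E(r,θ) := F(r·sin θ) + g·r·sin θ·∫₀^{f(θ)} ρ_θ(r̄(s), θ̄(s)) ds ≥ 0 for all (r,θ) ∈ (0,∞)×(0,π), and define the azimuthal velocity w(r,θ) = −Ω·r·sin θ + E(r,θ)^{1/2}/ρ(r,θ)^{1/2}. Then w and the pressure p satisfy the reduced steady Euler equations of a purely azimuthal flow at every point (r,θ) ∈ (0,∞)×(0,π): (i) −w²/r − 2Ω·w·sin θ − r·Ω²·sin²θ = −(1/ρ)·∂p/∂r − g, and (ii) −(w²/r)·cot θ − 2Ω·w·cos θ − r·Ω²·sin θ·cos θ = −(1/(ρ·r))·∂p/∂θ. -/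

import Mathlib

/-- The characteristic curve `s ↦ θ̄(s)`. -/
noncomputable def thetaBar (s : ℝ) : ℝ :=
  Real.arccos ((1 - Real.exp (2 * s)) / (1 + Real.exp (2 * s)))

/-- The function `f(θ) = ½·ln((1−cos θ)/(1+cos θ))`. -/
noncomputable def fChar (θ : ℝ) : ℝ :=
  (1 / 2) * Real.log ((1 - Real.cos θ) / (1 + Real.cos θ))

/-- The characteristic curve `s ↦ r̄(s)` associated with the point `(r, θ)`. -/
noncomputable def rBar (r θ s : ℝ) : ℝ :=
  (r * Real.sin θ / 2) * (Real.exp s + Real.exp (-s))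

/-- `𝓕(ξ,θ) = ∫₀^{f(θ)} g·ρ_θ(ξ·(e^s+e^{−s})/2, θ̄(s)) ds`. -/
noncomputable def calF (g : ℝ) (ρθ : ℝ → ℝ → ℝ) (ξ θ : ℝ) : ℝ :=
  ∫ s in (0:ℝ)..(fChar θ),
    g * ρθ (ξ * (Real.exp s + Real.exp (-s)) / 2) (thetaBar s)

/-- `E(r,θ) = F(r·sin θ) + g·r·sin θ·∫₀^{f(θ)} ρ_θ(r̄(s), θ̄(s)) ds`. -/
noncomputable def EE (g : ℝ) (ρθ : ℝ → ℝ → ℝ) (F : ℝ → ℝ) (r θ : ℝ) : ℝ :=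
  F (r * Real.sin θ) +
    g * r * Real.sin θ * ∫ s in (0:ℝ)..(fChar θ), ρθ (rBar r θ s) (thetaBar s)

/-- The azimuthal velocity `w(r,θ) = −Ω·r·sin θ + E(r,θ)^{1/2}/ρ(r,θ)^{1/2}`. -/
noncomputable def azVel (Ω g : ℝ) (ρ ρθ : ℝ → ℝ → ℝ) (F : ℝ → ℝ) (r θ : ℝ) : ℝ :=
  -(Ω * r * Real.sin θ) + Real.sqrt (EE g ρθ F r θ) / Real.sqrt (ρ r θ)

/-- The pressure
`p(r,θ) = b − g·∫_a^r ρ(s,θ) ds + ∫_{a sin θ}^{r sin θ} (F(s)/s + 𝓕(s,θ)) ds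
  + ∫_{π/2}^{θ} (F(a sin s)·cot s + 𝓕(a sin s, s)·a·cos s) ds`. -/
noncomputable def pres (g a b : ℝ) (ρ ρθ : ℝ → ℝ → ℝ) (F : ℝ → ℝ) (r θ : ℝ) : ℝ :=
  b - g * (∫ s in a..r, ρ s θ)
    + (∫ s in (a * Real.sin θ)..(r * Real.sin θ), (F s / s + calF g ρθ s θ))
    + ∫ s in (Real.pi / 2)..θ,
        (F (a * Real.sin s) * Real.cot s + calF g ρθ (a * Real.sin s) s * a * Real.cos s)

/-!
Put `h(ξ,θ) = F(ξ)/ξ + 𝓕(ξ,θ)` and `ξ = r sin θ`, so that `E = ξ h(ξ,θ)`. At `s = f(θ)` the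
characteristic is at the angle `θ̄ = θ` and has `cosh s = 1 / sin θ`, whence
`∂h/∂θ (ξ,θ) = g ρ_θ(ξ / sin θ, θ) / sin θ`. Differentiating the pressure in `θ` by the Leibniz
rule, this term integrates to `g ∫ₐʳ ρ_θ` and cancels the derivative of the weight of the fluid
column, while the term from the endpoint `a sin θ` cancels the integral along the arc `r = a`.
What remains is `∂p/∂θ = E cot θ`, and likewise `∂p/∂r = -g ρ + E / r`. Both Euler equations then
reduce to `E = ρ (w + Ω r sin θ)²`, which is the definition of `w`.
-/

open Real Set Filter Topology MeasureTheory Asymptotics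

section LeibnizRule

variable {E : Type*} [NormedAddCommGroup E] [NormedSpace ℝ E]

theorem continuousOn_intervalIntegral_of_continuousOn {X : Type*} [TopologicalSpace X]
    {f : X → ℝ → E} {S : Set X} (hf : ContinuousOn (Function.uncurry f) (S ×ˢ univ)) (a : ℝ)
    {b : X → ℝ} (hb : ContinuousOn b S) :
    ContinuousOn (fun x => ∫ t in a..b x, f x t) S := by
  rw [continuousOn_iff_continuous_domRestrict] at hb ⊢
  refine intervalIntegral.continuous_parametric_intervalIntegral_of_continuous
    (f := fun x : S => f x) ?_ hb
  exact hf.comp_continuous (f := fun p : S × ℝ => ((p.1 : X), p.2)) (by fun_prop)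
    fun p => ⟨p.1.2, mem_univ _⟩

variable {a b α' β' t₀ : ℝ} {α β : ℝ → ℝ} {f f' : ℝ → ℝ → E} {U V : Set ℝ}

theorem hasDerivAt_integral_of_continuousOn_deriv (hV : V ∈ 𝓝 t₀)
    (hf : ContinuousOn (Function.uncurry f) (uIcc a b ×ˢ V))
    (hf' : ContinuousOn (Function.uncurry f') (uIcc a b ×ˢ V))
    (hderiv : ∀ x ∈ uIcc a b, ∀ t ∈ V, HasDerivAt (f x) (f' x t) t) :
    HasDerivAt (fun t => ∫ x in a..b, f x t) (∫ x in a..b, f' x t₀) t₀ := by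
  obtain ⟨δ, hδ, hball⟩ := Metric.nhds_basis_closedBall.mem_iff.1 hV
  obtain ⟨C, hC⟩ := (isCompact_uIcc.prod (isCompact_closedBall t₀ δ)).exists_bound_of_continuousOn
    (hf'.mono (prod_mono Subset.rfl hball))
  have slice {g : ℝ → ℝ → E} (hg : ContinuousOn (Function.uncurry g) (uIcc a b ×ˢ V)) {t : ℝ}
      (ht : t ∈ V) : IntervalIntegrable (fun x => g x t) volume a b :=
    ContinuousOn.intervalIntegrable <|
      hg.comp (f := fun x => (x, t)) (by fun_prop) fun x hx => ⟨hx, ht⟩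
  have ht₀ : t₀ ∈ V := mem_of_mem_nhds hV
  refine (intervalIntegral.hasDerivAt_integral_of_dominated_loc_of_deriv_le
    (F := fun t x => f x t) (F' := fun t x => f' x t) (bound := fun _ => C)
    (Metric.closedBall_mem_nhds t₀ hδ) ?_ (slice hf ht₀)
    (slice hf' ht₀).def'.aestronglyMeasurable ?_ intervalIntegrable_const ?_).2
  · filter_upwards [hV] with t ht using (slice hf ht).def'.aestronglyMeasurable
  · exact Eventually.of_forall fun x hx t ht => hC (x, t) ⟨uIoc_subset_uIcc hx, ht⟩
  · exact Eventually.of_forall fun x hx t ht => hderiv x (uIoc_subset_uIcc hx) t (hball ht)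

variable [CompleteSpace E]

theorem hasDerivAt_integral_moving_endpoint (hβ : HasDerivAt β β' t₀)
    (hf : ContinuousAt (Function.uncurry f) (β t₀, t₀))
    (hint : ∀ᶠ t in 𝓝 t₀, IntervalIntegrable (f · t) volume (β t₀) (β t)) :
    HasDerivAt (fun t => ∫ x in β t₀..β t, f x t) (β' • f (β t₀) t₀) t₀ := by
  set c := f (β t₀) t₀
  have error_isLittleO : (fun t => ∫ x in β t₀..β t, (f x t - c)) =o[𝓝 t₀] fun t => t - t₀ := by
    refine IsLittleO.trans_isBigO (isLittleO_iff.2 fun ε hε => ?_) hβ.isBigO_sub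
    obtain ⟨δ, hδ, hclose⟩ := Metric.continuousAt_iff.1 hf ε hε
    filter_upwards [hβ.continuousAt.eventually (Metric.ball_mem_nhds _ hδ),
      Metric.ball_mem_nhds t₀ hδ] with t hβt ht
    refine intervalIntegral.norm_integral_le_of_norm_le_const fun x hx => ?_
    have hx' : x ∈ Metric.ball (β t₀) δ := by
      have h := (convex_ball (β t₀) δ).ordConnected.uIcc_subset (Metric.mem_ball_self hδ) hβt
      exact h (uIoc_subset_uIcc hx)
    rw [← dist_eq_norm]
    exact (hclose (max_lt hx' ht : dist (x, t) (β t₀, t₀) < δ)).le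
  have error_deriv : HasDerivAt (fun t => ∫ x in β t₀..β t, (f x t - c)) 0 t₀ := by
    simpa [hasDerivAt_iff_isLittleO] using error_isLittleO
  have main_deriv : HasDerivAt (fun t => (β t - β t₀) • c) (β' • c) t₀ :=
    (hβ.sub_const _).smul_const c
  refine ((main_deriv.add error_deriv).congr_deriv (add_zero _)).congr_of_eventuallyEq ?_
  filter_upwards [hint] with t ht
  simp [intervalIntegral.integral_sub ht intervalIntegrable_const]

theorem hasDerivAt_integral_leibniz
    (hU : IsOpen U) (hUc : U.OrdConnected) (hV : V ∈ 𝓝 t₀)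
    (hf : ContinuousOn (Function.uncurry f) (U ×ˢ V))
    (hf' : ContinuousOn (Function.uncurry f') (U ×ˢ V))
    (hderiv : ∀ x ∈ U, ∀ t ∈ V, HasDerivAt (f x) (f' x t) t)
    (hα : HasDerivAt α α' t₀) (hαU : α t₀ ∈ U) (hβ : HasDerivAt β β' t₀) (hβU : β t₀ ∈ U) :
    HasDerivAt (fun t => ∫ x in α t..β t, f x t)
      (β' • f (β t₀) t₀ - α' • f (α t₀) t₀ + ∫ x in α t₀..β t₀, f' x t₀) t₀ := by
  have slice {x y t : ℝ} (hx : x ∈ U) (hy : y ∈ U) (ht : t ∈ V) :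
      IntervalIntegrable (f · t) volume x y :=
    ContinuousOn.intervalIntegrable <| hf.comp (f := fun x => (x, t)) (by fun_prop)
      fun z hz => ⟨hUc.uIcc_subset hx hy hz, ht⟩
  have endpoint {γ : ℝ → ℝ} {γ' : ℝ} (hγ : HasDerivAt γ γ' t₀) (hγU : γ t₀ ∈ U) :
      HasDerivAt (fun t => ∫ x in γ t₀..γ t, f x t) (γ' • f (γ t₀) t₀) t₀ := by
    refine hasDerivAt_integral_moving_endpoint hγ
      (hf.continuousAt (prod_mem_nhds (hU.mem_nhds hγU) hV)) ?_
    filter_upwards [hγ.continuousAt (hU.mem_nhds hγU), hV] with t hγt ht using slice hγU hγt ht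
  have hsub : uIcc (α t₀) (β t₀) ×ˢ V ⊆ U ×ˢ V :=
    prod_mono (hUc.uIcc_subset hαU hβU) Subset.rfl
  have fixed := hasDerivAt_integral_of_continuousOn_deriv hV (hf.mono hsub) (hf'.mono hsub)
    fun x hx => hderiv x (hUc.uIcc_subset hαU hβU hx)
  refine (((endpoint hβ hβU).sub (endpoint hα hαU)).add fixed).congr_of_eventuallyEq ?_
  filter_upwards [hα.continuousAt (hU.mem_nhds hαU), hβ.continuousAt (hU.mem_nhds hβU), hV]
    with t hαt hβt ht
  simp only [Pi.add_apply, Pi.sub_apply]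
  rw [sub_add_eq_add_sub, add_comm,
    intervalIntegral.integral_add_adjacent_intervals (slice hαU hβU ht) (slice hβU hβt ht),
    intervalIntegral.integral_interval_sub_left (slice hαU hβt ht) (slice hαU hαt ht)]

theorem hasDerivAt_integral_right_of_continuousOn {g : ℝ → E} (hU : IsOpen U)
    (hUc : U.OrdConnected) (hg : ContinuousOn g U) (ha : a ∈ U) (hb : b ∈ U) :
    HasDerivAt (fun u => ∫ x in a..u, g x) (g b) b :=
  intervalIntegral.integral_hasDerivAt_right
    (hg.mono (hUc.uIcc_subset ha hb)).intervalIntegrable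
    (hg.stronglyMeasurableAtFilter hU b hb) (hg.continuousAt (hU.mem_nhds hb))

end LeibnizRule

theorem continuousOn_partialDeriv_snd {E F : Type*} [NormedAddCommGroup E] [NormedSpace ℝ E]
    [NormedAddCommGroup F] [NormedSpace ℝ F] {f f' : E → ℝ → F} {U : Set (E × ℝ)}
    (hU : IsOpen U) (hf : ContDiffOn ℝ 1 (Function.uncurry f) U)
    (hderiv : ∀ p ∈ U, HasDerivAt (f p.1) (f' p.1 p.2) p.2) :
    ContinuousOn (Function.uncurry f') U := by
  have hcont : ContinuousOn (fun p => fderiv ℝ (Function.uncurry f) p (0, 1)) U :=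
    (hf.continuousOn_fderiv_of_isOpen hU le_rfl).clm_apply continuousOn_const
  refine hcont.congr fun ⟨x, t⟩ hp => (hderiv _ hp).unique ?_
  have hdiff := ((hf.differentiableOn one_ne_zero).differentiableAt (hU.mem_nhds hp)).hasFDerivAt
  exact hdiff.comp_hasDerivAt t ((hasDerivAt_const t x).prodMk (hasDerivAt_id t))

section Characteristics

variable {θ : ℝ}

theorem fChar_eq_artanh (θ : ℝ) : fChar θ = artanh (-cos θ) := by
  rw [artanh_eq_half_log ⟨neg_le_neg (cos_le_one θ), neg_le.1 (neg_one_le_cos θ)⟩, fChar,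
    sub_neg_eq_add, ← sub_eq_add_neg]

theorem thetaBar_eq_arccos_tanh (s : ℝ) : thetaBar s = arccos (-tanh s) := by
  rw [thetaBar, tanh_eq, exp_neg, two_mul, exp_add]
  congr 1
  field_simp
  ring

theorem neg_cos_mem_Ioo (hθ : θ ∈ Ioo 0 π) : -cos θ ∈ Ioo (-1) 1 := by
  have hsin := sin_pos_of_mem_Ioo hθ
  constructor <;> nlinarith [sin_sq_add_cos_sq θ]

theorem hasDerivAt_fChar (hθ : θ ∈ Ioo 0 π) : HasDerivAt fChar (1 / sin θ) θ := by
  obtain ⟨hlt, hgt⟩ := neg_cos_mem_Ioo hθ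
  have hsub : 0 < 1 - cos θ := by linarith
  have hadd : 0 < 1 + cos θ := by linarith
  have hsin := sin_pos_of_mem_Ioo hθ
  refine (((((hasDerivAt_cos θ).const_sub 1).div ((hasDerivAt_cos θ).const_add 1) hadd.ne').log
    (div_pos hsub hadd).ne').const_mul (1 / 2 : ℝ)).congr_deriv ?_
  simp only [Pi.div_apply]
  field_simp
  linear_combination 2 * sin_sq_add_cos_sq θ

theorem thetaBar_fChar (hθ : θ ∈ Ioo 0 π) : thetaBar (fChar θ) = θ := by
  rw [thetaBar_eq_arccos_tanh, fChar_eq_artanh, tanh_artanh (neg_cos_mem_Ioo hθ), neg_neg,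
    arccos_cos hθ.1.le hθ.2.le]

theorem cosh_fChar (hθ : θ ∈ Ioo 0 π) : cosh (fChar θ) = 1 / sin θ := by
  rw [fChar_eq_artanh, cosh_artanh (neg_cos_mem_Ioo hθ), neg_sq, ← sin_sq,
    sqrt_sq (sin_pos_of_mem_Ioo hθ).le]

theorem thetaBar_mem_Ioo (s : ℝ) : thetaBar s ∈ Ioo 0 π := by
  rw [thetaBar_eq_arccos_tanh]
  refine ⟨arccos_pos.2 (neg_lt.1 (neg_one_lt_tanh s)), (arccos_le_pi _).lt_of_ne fun h => ?_⟩
  exact (neg_lt_neg (tanh_lt_one s)).not_ge (arccos_eq_pi.1 h)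

theorem continuous_thetaBar : Continuous thetaBar := by
  refine continuous_arccos.comp (Continuous.div (by fun_prop) (by fun_prop) fun s => ?_)
  positivity

end Characteristics

section Pressure

/-- The density `F(ξ)/ξ + 𝓕(ξ,θ)` of the centripetal force that keeps the fluid on its circle of
radius `ξ = r sin θ` about the rotation axis. It is the integrand of the pressure, and `E` is
`ξ` times it. -/
noncomputable def centripetalForce (g : ℝ) (ρθ : ℝ → ℝ → ℝ) (F : ℝ → ℝ) (ξ θ : ℝ) : ℝ :=
  F ξ / ξ + calF g ρθ ξ θ

theorem EE_eq_mul_centripetalForce (g : ℝ) (ρθ : ℝ → ℝ → ℝ) (F : ℝ → ℝ) {r θ : ℝ}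
    (h : r * sin θ ≠ 0) :
    EE g ρθ F r θ = r * sin θ * centripetalForce g ρθ F (r * sin θ) θ := by
  have integral_eq :
      calF g ρθ (r * sin θ) θ = g * ∫ s in 0..fChar θ, ρθ (rBar r θ s) (thetaBar s) := by
    simp only [calF, rBar, intervalIntegral.integral_const_mul, div_mul_eq_mul_div]
  rw [EE, centripetalForce, integral_eq, mul_add, mul_div_cancel₀ _ h]
  ring

variable (g a b : ℝ) {ρ ρθ : ℝ → ℝ → ℝ} {F : ℝ → ℝ} {r θ ξ : ℝ}

theorem continuousOn_calF_integrand
    (hρθ : ContinuousOn (Function.uncurry ρθ) (Ioi 0 ×ˢ Ioo 0 π)) :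
    ContinuousOn
      (fun p : ℝ × ℝ => g * ρθ (p.1 * (exp p.2 + exp (-p.2)) / 2) (thetaBar p.2))
      (Ioi 0 ×ˢ univ) := by
  have := continuous_thetaBar
  refine continuousOn_const.mul (hρθ.comp
    (f := fun p : ℝ × ℝ => (p.1 * (exp p.2 + exp (-p.2)) / 2, thetaBar p.2)) (by fun_prop) ?_)
  rintro ⟨ξ, s⟩ ⟨hξ : 0 < ξ, -⟩
  exact ⟨by simp only [mem_Ioi]; positivity, thetaBar_mem_Ioo s⟩

theorem continuousOn_calF (hρθ : ContinuousOn (Function.uncurry ρθ) (Ioi 0 ×ˢ Ioo 0 π)) :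
    ContinuousOn (Function.uncurry (calF g ρθ)) (Ioi 0 ×ˢ Ioo 0 π) := by
  have fChar_cont : ContinuousOn fChar (Ioo 0 π) :=
    fun θ hθ => (hasDerivAt_fChar hθ).continuousAt.continuousWithinAt
  refine continuousOn_intervalIntegral_of_continuousOn (X := ℝ × ℝ)
    (f := fun p s => g * ρθ (p.1 * (exp s + exp (-s)) / 2) (thetaBar s)) ?_ 0
    (fChar_cont.comp continuousOn_snd fun p hp => hp.2)
  exact (continuousOn_calF_integrand g hρθ).comp (f := fun q : (ℝ × ℝ) × ℝ => (q.1.1, q.2))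
    (by fun_prop) fun q hq => ⟨hq.1.1, mem_univ _⟩

theorem hasDerivAt_calF (hρθ : ContinuousOn (Function.uncurry ρθ) (Ioi 0 ×ˢ Ioo 0 π))
    (hξ : 0 < ξ) (hθ : θ ∈ Ioo 0 π) :
    HasDerivAt (calF g ρθ ξ) (g * ρθ (ξ / sin θ) θ / sin θ) θ := by
  have hcont : ContinuousOn
      (fun s => g * ρθ (ξ * (exp s + exp (-s)) / 2) (thetaBar s)) univ :=
    (continuousOn_calF_integrand g hρθ).comp (f := fun s : ℝ => (ξ, s)) (by fun_prop)
      fun s _ => ⟨hξ, mem_univ s⟩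
  -- The characteristic curve passes through `(ξ / sin θ, θ)` at the parameter `s = fChar θ`.
  have endpoint : ξ * (exp (fChar θ) + exp (-fChar θ)) / 2 = ξ / sin θ := by
    rw [mul_div_assoc, ← cosh_eq, cosh_fChar hθ, mul_one_div]
  refine ((hasDerivAt_integral_right_of_continuousOn isOpen_univ ordConnected_univ hcont
    (mem_univ 0) (mem_univ _)).comp θ (hasDerivAt_fChar hθ)).congr_deriv ?_
  rw [endpoint, thetaBar_fChar hθ, mul_one_div]

theorem continuousOn_centripetalForce
    (hρθ : ContinuousOn (Function.uncurry ρθ) (Ioi 0 ×ˢ Ioo 0 π)) (hF : ContinuousOn F (Ioi 0)) :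
    ContinuousOn (Function.uncurry (centripetalForce g ρθ F)) (Ioi 0 ×ˢ Ioo 0 π) :=
  ((hF.comp continuousOn_fst fun _ hp => hp.1).div continuousOn_fst
    fun _ hp => (mem_Ioi.1 hp.1).ne').add (continuousOn_calF g hρθ)

variable {a}

theorem hasDerivAt_integral_centripetalForce
    (hρθ : ContinuousOn (Function.uncurry ρθ) (Ioi 0 ×ˢ Ioo 0 π)) (hF : ContinuousOn F (Ioi 0))
    (ha : 0 < a) (hr : 0 < r) (hθ : θ ∈ Ioo 0 π) :
    HasDerivAt (fun θ => ∫ ξ in (a * sin θ)..(r * sin θ), centripetalForce g ρθ F ξ θ)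
      (r * cos θ * centripetalForce g ρθ F (r * sin θ) θ
        - a * cos θ * centripetalForce g ρθ F (a * sin θ) θ + g * ∫ s in a..r, ρθ s θ) θ := by
  have hsin := sin_pos_of_mem_Ioo hθ
  have deriv_cont : ContinuousOn
      (Function.uncurry fun ξ θ => g * ρθ (ξ / sin θ) θ / sin θ) (Ioi 0 ×ˢ Ioo 0 π) := by
    have sin_ne (p : ℝ × ℝ) (hp : p ∈ Ioi (0 : ℝ) ×ˢ Ioo 0 π) : sin p.2 ≠ 0 :=
      (sin_pos_of_mem_Ioo hp.2).ne'
    refine (continuousOn_const.mul (hρθ.comp (f := fun p : ℝ × ℝ => (p.1 / sin p.2, p.2)) ?_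
      fun p hp => ⟨div_pos hp.1 (sin_pos_of_mem_Ioo hp.2), hp.2⟩)).div (by fun_prop) sin_ne
    exact (continuousOn_fst.div (by fun_prop) sin_ne).prodMk continuousOn_snd
  have rescale : ∫ ξ in (a * sin θ)..(r * sin θ), g * ρθ (ξ / sin θ) θ / sin θ
      = g * ∫ s in a..r, ρθ s θ := by
    rw [intervalIntegral.integral_comp_div (fun s => g * ρθ s θ / sin θ) hsin.ne',
      mul_div_cancel_right₀ _ hsin.ne', mul_div_cancel_right₀ _ hsin.ne',
      intervalIntegral.integral_div, intervalIntegral.integral_const_mul, smul_eq_mul,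
      mul_div_cancel₀ _ hsin.ne']
  rw [← rescale]
  exact hasDerivAt_integral_leibniz isOpen_Ioi ordConnected_Ioi (Ioo_mem_nhds hθ.1 hθ.2)
    (continuousOn_centripetalForce g hρθ hF) deriv_cont
    (fun ξ hξ t ht => (hasDerivAt_calF g hρθ hξ ht).const_add _)
    ((hasDerivAt_sin θ).const_mul a) (mul_pos ha hsin)
    ((hasDerivAt_sin θ).const_mul r) (mul_pos hr hsin)

theorem hasDerivAt_pres_radius (hρ : ContinuousOn (Function.uncurry ρ) (Ioi 0 ×ˢ Ioo 0 π))
    (hρθ : ContinuousOn (Function.uncurry ρθ) (Ioi 0 ×ˢ Ioo 0 π)) (hF : ContinuousOn F (Ioi 0))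
    (ha : 0 < a) (hr : 0 < r) (hθ : θ ∈ Ioo 0 π) :
    HasDerivAt (fun r => pres g a b ρ ρθ F r θ) (-(g * ρ r θ) + EE g ρθ F r θ / r) r := by
  have hsin := sin_pos_of_mem_Ioo hθ
  have slice {f : ℝ → ℝ → ℝ} (hf : ContinuousOn (Function.uncurry f) (Ioi 0 ×ˢ Ioo 0 π)) :
      ContinuousOn (f · θ) (Ioi 0) :=
    hf.comp (f := fun x : ℝ => (x, θ)) (by fun_prop) fun x hx => ⟨hx, hθ⟩
  have weight : HasDerivAt (fun r => ∫ s in a..r, ρ s θ) (ρ r θ) r :=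
    hasDerivAt_integral_right_of_continuousOn isOpen_Ioi ordConnected_Ioi (slice hρ) ha hr
  have radial := (hasDerivAt_integral_right_of_continuousOn isOpen_Ioi ordConnected_Ioi
    (slice (continuousOn_centripetalForce g hρθ hF)) (mul_pos ha hsin)
    (mul_pos hr hsin)).comp r ((hasDerivAt_id r).mul_const (sin θ))
  refine ((((weight.const_mul g).const_sub b).add radial).add_const _).congr_deriv ?_
  rw [EE_eq_mul_centripetalForce g ρθ F (mul_pos hr hsin).ne']
  field_simp

theorem hasDerivAt_pres_arc (hρθ : ContinuousOn (Function.uncurry ρθ) (Ioi 0 ×ˢ Ioo 0 π))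
    (hF : ContinuousOn F (Ioi 0)) (ha : 0 < a) (hθ : θ ∈ Ioo 0 π) :
    HasDerivAt (fun θ => ∫ s in (π / 2)..θ,
        (F (a * sin s) * cot s + calF g ρθ (a * sin s) s * a * cos s))
      (a * cos θ * centripetalForce g ρθ F (a * sin θ) θ) θ := by
  have integrand_eq {s : ℝ} (hs : s ∈ Ioo 0 π) :
      F (a * sin s) * cot s + calF g ρθ (a * sin s) s * a * cos s
        = a * cos s * centripetalForce g ρθ F (a * sin s) s := by
    have hsin := sin_pos_of_mem_Ioo hs
    rw [centripetalForce, cot_eq_cos_div_sin]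
    field_simp
  have integrand_cont : ContinuousOn
      (fun s => a * cos s * centripetalForce g ρθ F (a * sin s) s) (Ioo 0 π) :=
    ContinuousOn.mul (by fun_prop) <| (continuousOn_centripetalForce g hρθ hF).comp
      (f := fun s => (a * sin s, s)) (by fun_prop)
      fun s hs => ⟨mul_pos ha (sin_pos_of_mem_Ioo hs), hs⟩
  rw [← integrand_eq hθ]
  exact hasDerivAt_integral_right_of_continuousOn isOpen_Ioo ordConnected_Ioo
    (integrand_cont.congr fun s hs => integrand_eq hs) ⟨pi_div_two_pos, half_lt_self pi_pos⟩ hθ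

theorem hasDerivAt_pres_angle (hρ : ContinuousOn (Function.uncurry ρ) (Ioi 0 ×ˢ Ioo 0 π))
    (hρθ : ContinuousOn (Function.uncurry ρθ) (Ioi 0 ×ˢ Ioo 0 π))
    (hderiv : ∀ r ∈ Ioi (0 : ℝ), ∀ t ∈ Ioo 0 π, HasDerivAt (ρ r) (ρθ r t) t)
    (hF : ContinuousOn F (Ioi 0)) (ha : 0 < a) (hr : 0 < r) (hθ : θ ∈ Ioo 0 π) :
    HasDerivAt (pres g a b ρ ρθ F r) (EE g ρθ F r θ * cot θ) θ := by
  have hsin := sin_pos_of_mem_Ioo hθ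
  have hpos : uIcc a r ⊆ Ioi 0 := ordConnected_Ioi.uIcc_subset ha hr
  have hsub : uIcc a r ×ˢ Ioo 0 π ⊆ Ioi 0 ×ˢ Ioo 0 π := prod_mono hpos Subset.rfl
  have weight : HasDerivAt (fun θ => ∫ s in a..r, ρ s θ) (∫ s in a..r, ρθ s θ) θ :=
    hasDerivAt_integral_of_continuousOn_deriv (Ioo_mem_nhds hθ.1 hθ.2) (hρ.mono hsub)
      (hρθ.mono hsub) fun x hx => hderiv x (hpos hx)
  refine ((((weight.const_mul g).const_sub b).add
    (hasDerivAt_integral_centripetalForce g hρθ hF ha hr hθ)).add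
    (hasDerivAt_pres_arc g hρθ hF ha hθ)).congr_deriv ?_
  rw [EE_eq_mul_centripetalForce g ρθ F (mul_pos hr hsin).ne', cot_eq_cos_div_sin]
  field_simp
  ring

end Pressure

theorem EE_eq_mul_azVel_add_sq (Ω : ℝ) {g : ℝ} {ρ ρθ : ℝ → ℝ → ℝ} {F : ℝ → ℝ} {r θ : ℝ}
    (hρ : 0 < ρ r θ) (hE : 0 ≤ EE g ρθ F r θ) :
    EE g ρθ F r θ = ρ r θ * (azVel Ω g ρ ρθ F r θ + Ω * r * sin θ) ^ 2 := by
  rw [azVel, neg_add_cancel_comm, div_pow, sq_sqrt hE, sq_sqrt hρ.le, mul_div_cancel₀ _ hρ.ne']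

theorem azimuthal_flow_solves_Euler_general (Ω g b : ℝ) {a : ℝ} {ρ ρθ : ℝ → ℝ → ℝ} {F : ℝ → ℝ}
    (hρ : ContinuousOn (Function.uncurry ρ) (Ioi 0 ×ˢ Ioo 0 π))
    (hρθ : ContinuousOn (Function.uncurry ρθ) (Ioi 0 ×ˢ Ioo 0 π))
    (hderiv : ∀ r ∈ Ioi (0 : ℝ), ∀ t ∈ Ioo 0 π, HasDerivAt (ρ r) (ρθ r t) t)
    (hF : ContinuousOn F (Ioi 0)) {r θ : ℝ} (ha : 0 < a) (hr : 0 < r) (hθ : θ ∈ Ioo 0 π)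
    (hρpos : 0 < ρ r θ) (hE : 0 ≤ EE g ρθ F r θ) :
    (-(azVel Ω g ρ ρθ F r θ) ^ 2 / r - 2 * Ω * azVel Ω g ρ ρθ F r θ * sin θ
        - r * Ω ^ 2 * (sin θ) ^ 2
      = -(1 / ρ r θ) * deriv (fun r' => pres g a b ρ ρθ F r' θ) r - g) ∧
    (-((azVel Ω g ρ ρθ F r θ) ^ 2 / r) * cot θ - 2 * Ω * azVel Ω g ρ ρθ F r θ * cos θ
        - r * Ω ^ 2 * sin θ * cos θ
      = -(1 / (ρ r θ * r)) * deriv (fun θ' => pres g a b ρ ρθ F r θ') θ) := by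
  have hsin := sin_pos_of_mem_Ioo hθ
  rw [(hasDerivAt_pres_radius g b hρ hρθ hF ha hr hθ).deriv,
    (hasDerivAt_pres_angle g b hρ hρθ hderiv hF ha hr hθ).deriv,
    EE_eq_mul_azVel_add_sq Ω hρpos hE, cot_eq_cos_div_sin]
  generalize azVel Ω g ρ ρθ F r θ = w
  constructor <;> field_simp <;> ring

/-- The azimuthal velocity `w` and the pressure `p` satisfy the reduced steady
Euler equations of a purely azimuthal flow at every point of `(0,∞)×(0,π)`. -/
theorem azimuthal_flow_solves_Euler (Ω g a b : ℝ)
    (hΩ : 0 < Ω) (hg : 0 < g) (ha : 0 < a)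
    (ρ ρθ : ℝ → ℝ → ℝ)
    (hρ : ContDiffOn ℝ 2 (fun q : ℝ × ℝ => ρ q.1 q.2)
      (Set.Ioi 0 ×ˢ Set.Ioo 0 Real.pi))
    (hρθ : ∀ r ∈ Set.Ioi (0:ℝ), ∀ t ∈ Set.Ioo 0 Real.pi,
      HasDerivAt (fun u => ρ r u) (ρθ r t) t)
    (hρpos : ∀ r ∈ Set.Ioi (0:ℝ), ∀ θ ∈ Set.Ioo 0 Real.pi, 0 < ρ r θ)
    (F : ℝ → ℝ) (hF : ContDiffOn ℝ 1 F (Set.Ioi 0))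
    (hE : ∀ r ∈ Set.Ioi (0:ℝ), ∀ θ ∈ Set.Ioo 0 Real.pi, 0 ≤ EE g ρθ F r θ) :
    ∀ r ∈ Set.Ioi (0:ℝ), ∀ θ ∈ Set.Ioo 0 Real.pi,
      (-(azVel Ω g ρ ρθ F r θ)^2 / r - 2 * Ω * azVel Ω g ρ ρθ F r θ * Real.sin θ
          - r * Ω^2 * (Real.sin θ)^2
        = -(1 / ρ r θ) * deriv (fun r' => pres g a b ρ ρθ F r' θ) r - g) ∧
      (-((azVel Ω g ρ ρθ F r θ)^2 / r) * Real.cot θ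
          - 2 * Ω * azVel Ω g ρ ρθ F r θ * Real.cos θ
          - r * Ω^2 * Real.sin θ * Real.cos θ
        = -(1 / (ρ r θ * r)) * deriv (fun θ' => pres g a b ρ ρθ F r θ') θ) := by
  exact fun r hr θ hθ => azimuthal_flow_solves_Euler_general Ω g b hρ.continuousOn
    (continuousOn_partialDeriv_snd (isOpen_Ioi.prod isOpen_Ioo) (hρ.of_le one_le_two)
      fun p hp => hρθ p.1 hp.1 p.2 hp.2)
    hρθ hF.continuousOn ha hr hθ (hρpos r hr θ hθ) (hE r hr θ hθ)
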